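/- arXiv:2410.03906 — 10 statements merged into one kernel-verified Lean document; each statement's English description precedes it below -/
import Mathlib

section
/- Let X_R and X be real vector spaces, Y a type, Q : X_R → X a linear map, N ∈ ℕ, P : X → (Fin N → ℝ) a linear map, and S a set of functions from X to Y. Assume: (i) every F ∈ S factors through P, i.e. there exists F̂ : (Fin N → ℝ) → Y with F = F̂ ∘ P; and (ii) for every coordinate i ∈ Fin N there exist F ∈ S and g : Y → ℝ with (P x) i = g(F(x)) for all x ∈ X. Then the set of gauge vectors of the reduced model, {y ∈ X_R : ∀ F ∈ S, ∀ r ∈ X_R, ∀ η ∈ ℝ, F(Q(r + η • y)) = F(Q(r))}, equals the kernel of the composite linear map P ∘ Q. (This is the gauge half of the paper's theorem T_R = Ker(P ∘ Q); taking Q the identity gives the complete-model statement T = Ker P.) -/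
section Determination

variable {X Y Z : Type*}

theorem factorsThrough_of_exists_forall_eq_apply {f : X → Z} {g : X → Y}
    (h : ∃ e : Y → Z, ∀ x, f x = e (g x)) : f.FactorsThrough g := by
  obtain ⟨e, he⟩ := h
  intro a b hab
  rw [he a, he b, hab]

theorem eq_of_forall_coordinate_determined {ι : Type*} {M : ι → Type*}
    {P : X → ∀ i, M i} {S : Set (X → Y)}
    (hP : ∀ i, ∃ F ∈ S, ∃ g : Y → M i, ∀ x, P x i = g (F x)) {x x' : X}
    (hS : ∀ F ∈ S, F x = F x') : P x = P x' := by
  ext i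
  obtain ⟨F, hF, hPF⟩ := hP i
  exact factorsThrough_of_exists_forall_eq_apply hPF (hS F hF)

end Determination

section Gauge

variable {R XR X W Y : Type*} [Semiring R]
  [AddCommMonoid XR] [Module R XR] [AddCommMonoid X] [Module R X] [AddCommMonoid W] [Module R W]

/-- The gauge vectors of the reduced model embedded by `Q`: the directions in its parameter space
along which no experiment in `S` changes, whatever the base point `r`. -/
def reducedGaugeVectors (Q : XR →ₗ[R] X) (S : Set (X → Y)) : Set XR :=
  {y | ∀ F ∈ S, ∀ r : XR, ∀ η : R, F (Q (r + η • y)) = F (Q r)}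

variable {Q : XR →ₗ[R] X} {P : X →ₗ[R] W} {S : Set (X → Y)}

theorem apply_eq_apply_zero_of_mem_reducedGaugeVectors {y : XR}
    (hy : y ∈ reducedGaugeVectors Q S) {F : X → Y} (hF : F ∈ S) : F (Q y) = F 0 := by
  simpa only [zero_add, one_smul, map_zero] using hy F hF 0 1

theorem reducedGaugeVectors_subset_ker
    (hP : ∀ x x', (∀ F ∈ S, F x = F x') → P x = P x') :
    reducedGaugeVectors Q S ⊆ LinearMap.ker (P ∘ₗ Q) := by
  intro y hy
  calc
    P (Q y) = P 0 :=
      hP _ _ fun _ hF ↦ apply_eq_apply_zero_of_mem_reducedGaugeVectors hy hF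
    _ = 0 := map_zero P

theorem ker_subset_reducedGaugeVectors (hS : ∀ F ∈ S, F.FactorsThrough P) :
    ↑(LinearMap.ker (P ∘ₗ Q)) ⊆ reducedGaugeVectors Q S := by
  intro y hy F hF r η
  have hPQy : P (Q y) = 0 := hy
  apply hS F hF
  calc
    P (Q (r + η • y)) = P (Q r) + η • P (Q y) := by simp only [map_add, map_smul]
    _ = P (Q r) := by rw [hPQy, smul_zero, add_zero]

theorem reduced_gauge_eq_ker_general (hS : ∀ F ∈ S, F.FactorsThrough P)
    (hP : ∀ x x', (∀ F ∈ S, F x = F x') → P x = P x') :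
    reducedGaugeVectors Q S = LinearMap.ker (P ∘ₗ Q) :=
  (reducedGaugeVectors_subset_ker hP).antisymm (ker_subset_reducedGaugeVectors hS)

end Gauge

/-- The reduced gauge space equals the kernel of `P ∘ Q`: given that every experiment
factors through the observation map `P` and every coordinate of `P` is determined by
some experiment, the gauge vectors of the reduced model `(X_R, Q)` are exactly
`Ker (P ∘ Q)`. -/
theorem reduced_gauge_eq_ker {XR X Y : Type*}
    [AddCommGroup XR] [Module ℝ XR] [AddCommGroup X] [Module ℝ X]
    (Q : XR →ₗ[ℝ] X) (N : ℕ) (P : X →ₗ[ℝ] (Fin N → ℝ)) (S : Set (X → Y))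
    (h1 : ∀ F ∈ S, ∃ Fhat : (Fin N → ℝ) → Y, ∀ x : X, F x = Fhat (P x))
    (h2 : ∀ i : Fin N, ∃ F ∈ S, ∃ g : Y → ℝ, ∀ x : X, P x i = g (F x)) :
    {y : XR | ∀ F ∈ S, ∀ r : XR, ∀ η : ℝ, F (Q (r + η • y)) = F (Q r)} =
      ↑(LinearMap.ker (P ∘ₗ Q)) :=
  reduced_gauge_eq_ker_general (fun F hF ↦ factorsThrough_of_exists_forall_eq_apply (h1 F hF))
    fun _ _ ↦ eq_of_forall_coordinate_determined h2
end

section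
/- Let X_R and X be real vector spaces with X_R finite-dimensional, Y a type, Q : X_R → X linear, N ∈ ℕ, P : X → (Fin N → ℝ) linear, and S a set of functions from X to Y. Assume: (i) every F ∈ S factors through P, i.e. there exists F̂ : (Fin N → ℝ) → Y with F = F̂ ∘ P; and (ii) for every coordinate i ∈ Fin N there exist F ∈ S and g : Y → ℝ with (P x) i = g(F(x)) for all x ∈ X. Then for every linear functional f : X_R → ℝ, the following are equivalent: (a) f is learnable through Q, i.e. there exist m ∈ ℕ, F₁,…,F_m ∈ S, and f̂ : Yᵐ → ℝ with f(r) = f̂(F₁(Q r),…,F_m(Q r)) for all r ∈ X_R; (b) there exists a linear functional g on Fin N → ℝ with f = g ∘ P ∘ Q. (This is the learnable half of the paper's theorem L_R = Im(Qᵀ ∘ Pᵀ); taking Q the identity gives the complete-model statement L = Im Pᵀ.) -/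
/-!
Learnability is a set-theoretic condition: experiments are functions of `P`, and finitely many of
them recover `P`, so `f` is learnable through `Q` exactly when `P (Q r) = P (Q s)` forces
`f r = f s`. For a linear `f` this says `ker (P ∘ Q) ≤ ker f`, and over a division ring the induced
map on the quotient by `ker (P ∘ Q)` extends along its embedding into the codomain of `P`.
-/

section Learnable

open Function

variable {R X Y Z W : Type*} {S : Set (X → Y)} {Q : R → X} {f : R → W}

/-- `f` is learnable through `Q` from the experiments in `S`: it is a function of the outcomes, at
the parameters `Q r`, of finitely many experiments in `S`. -/
def LearnableThrough (S : Set (X → Y)) (Q : R → X) (f : R → W) : Prop :=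
  ∃ (m : ℕ) (F : Fin m → (X → Y)), (∀ i, F i ∈ S) ∧
    ∃ fhat : (Fin m → Y) → W, ∀ r, f r = fhat (fun i => F i (Q r))

theorem factorsThrough_of_forall_eq {p : X → Y} {q : X → Z} {e : Z → Y}
    (h : ∀ x, p x = e (q x)) : p.FactorsThrough q :=
  fun a b hab => by rw [h a, h b, hab]

theorem LearnableThrough.factorsThrough {P : X → Z} (hf : LearnableThrough S Q f)
    (hS : ∀ F ∈ S, F.FactorsThrough P) : f.FactorsThrough (P ∘ Q) := by
  obtain ⟨m, F, hF, fhat, hfhat⟩ := hf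
  intro r s hrs
  have outcomes_eq : (fun i => F i (Q r)) = fun i => F i (Q s) :=
    funext fun i => hS (F i) (hF i) hrs
  rw [hfhat r, hfhat s, outcomes_eq]

theorem learnableThrough_of_factorsThrough [Nonempty W] {ι : Type*} [Finite ι] {F : ι → X → Y}
    (hF : ∀ i, F i ∈ S) (hf : f.FactorsThrough fun r i => F i (Q r)) :
    LearnableThrough S Q f := by
  obtain ⟨m, ⟨e⟩⟩ := Finite.exists_equiv_fin ι
  have hfe : f.FactorsThrough fun r j => F (e.symm j) (Q r) := fun r s hrs =>
    hf <| funext <| e.symm.surjective.forall.2 (congrFun hrs)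
  obtain ⟨fhat, hfhat⟩ := (factorsThrough_iff f).1 hfe
  exact ⟨m, F ∘ e.symm, fun j => hF (e.symm j), fhat, congrFun hfhat⟩

theorem learnableThrough_iff_factorsThrough [Nonempty W] {ι : Type*} [Finite ι] {V : ι → Type*}
    {P : X → ∀ i, V i} (hS : ∀ F ∈ S, F.FactorsThrough P)
    (hP : ∀ i, ∃ F ∈ S, (fun x => P x i).FactorsThrough F) :
    LearnableThrough S Q f ↔ f.FactorsThrough (P ∘ Q) := by
  refine ⟨fun hf => hf.factorsThrough hS, fun hf => ?_⟩
  choose F hF hPF using hP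
  exact learnableThrough_of_factorsThrough hF fun r s hrs =>
    hf <| funext fun i => hPF i (congrFun hrs i)

end Learnable

section Linear

variable {K U V W : Type*} [AddCommGroup U] [AddCommGroup V] [AddCommGroup W]

theorem factorsThrough_iff_ker_le_ker [Ring K] [Module K U] [Module K V] [Module K W]
    {f : U →ₗ[K] W} {φ : U →ₗ[K] V} :
    Function.FactorsThrough f φ ↔ LinearMap.ker φ ≤ LinearMap.ker f := by
  refine ⟨fun h u hu => ?_, fun h u v huv => ?_⟩
  · rw [LinearMap.mem_ker, ← map_zero f]
    exact h (by rw [LinearMap.mem_ker.1 hu, map_zero])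
  · exact LinearMap.sub_mem_ker_iff.1 (h (LinearMap.sub_mem_ker_iff.2 huv))

theorem exists_eq_comp_iff_ker_le_ker [DivisionRing K] [Module K U] [Module K V] [Module K W]
    {f : U →ₗ[K] W} {φ : U →ₗ[K] V} :
    (∃ g : V →ₗ[K] W, f = g ∘ₗ φ) ↔ LinearMap.ker φ ≤ LinearMap.ker f := by
  refine ⟨?_, fun h => ?_⟩
  · rintro ⟨g, rfl⟩
    exact LinearMap.ker_le_ker_comp φ g
  · let φbar := (LinearMap.ker φ).liftQ φ le_rfl
    have ker_φbar : LinearMap.ker φbar = ⊥ := Submodule.ker_liftQ_eq_bot' _ φ rfl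
    obtain ⟨ψ, hψ⟩ := φbar.exists_leftInverse_of_injective ker_φbar
    refine ⟨(LinearMap.ker φ).liftQ f h ∘ₗ ψ, LinearMap.ext fun u => ?_⟩
    have ψ_φ : ψ (φ u) = (LinearMap.ker φ).mkQ u :=
      LinearMap.congr_fun hψ ((LinearMap.ker φ).mkQ u)
    rw [LinearMap.comp_apply, LinearMap.comp_apply, ψ_φ, Submodule.mkQ_apply, Submodule.liftQ_apply]

end Linear

theorem reduced_learnable_iff_general {K XR X Y W ι : Type*} {V : ι → Type*} [DivisionRing K]
    [AddCommGroup XR] [Module K XR] [AddCommGroup X] [Module K X] [AddCommGroup W] [Module K W]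
    [Finite ι] [∀ i, AddCommGroup (V i)] [∀ i, Module K (V i)]
    (Q : XR →ₗ[K] X) (P : X →ₗ[K] ∀ i, V i) (S : Set (X → Y))
    (hS : ∀ F ∈ S, F.FactorsThrough P)
    (hP : ∀ i, ∃ F ∈ S, (fun x => P x i).FactorsThrough F) (f : XR →ₗ[K] W) :
    LearnableThrough S Q f ↔ ∃ g : (∀ i, V i) →ₗ[K] W, f = g ∘ₗ (P ∘ₗ Q) := by
  rw [learnableThrough_iff_factorsThrough hS hP, ← LinearMap.coe_comp,
    factorsThrough_iff_ker_le_ker, exists_eq_comp_iff_ker_le_ker]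

/-- The reduced learnable space equals `Im (Qᵀ ∘ Pᵀ)`: given that every experiment
factors through the observation map `P` and every coordinate of `P` is determined by
some experiment, a linear functional `f` on the (finite-dimensional) reduced parameter
space is learnable through `Q` iff it factors as a linear functional composed with
`P ∘ Q`. -/
theorem reduced_learnable_iff {XR X Y : Type*}
    [AddCommGroup XR] [Module ℝ XR] [FiniteDimensional ℝ XR]
    [AddCommGroup X] [Module ℝ X]
    (Q : XR →ₗ[ℝ] X) (N : ℕ) (P : X →ₗ[ℝ] (Fin N → ℝ)) (S : Set (X → Y))
    (h1 : ∀ F ∈ S, ∃ Fhat : (Fin N → ℝ) → Y, ∀ x : X, F x = Fhat (P x))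
    (h2 : ∀ i : Fin N, ∃ F ∈ S, ∃ g : Y → ℝ, ∀ x : X, P x i = g (F x))
    (f : XR →ₗ[ℝ] ℝ) :
    (∃ (m : ℕ) (F : Fin m → (X → Y)), (∀ i, F i ∈ S) ∧
        ∃ fhat : (Fin m → Y) → ℝ, ∀ r : XR, f r = fhat (fun i => F i (Q r))) ↔
      (∃ g : (Fin N → ℝ) →ₗ[ℝ] ℝ, f = g ∘ₗ (P ∘ₗ Q)) := by
  exact reduced_learnable_iff_general Q P S
    (fun F hF => let ⟨_, h⟩ := h1 F hF; factorsThrough_of_forall_eq h)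
    (fun i => let ⟨F, hF, _, h⟩ := h2 i; ⟨F, hF, factorsThrough_of_forall_eq h⟩) f
end

section
/- For every n ≥ 1, the square matrix M, indexed by the nonempty subsets of Fin n, with entries M(s,t) = 1 if s ∩ t ≠ ∅ and M(s,t) = 0 otherwise, is invertible over ℚ (equivalently, its determinant is nonzero). Equivalently, the family of vectors d_s ∈ ({nonempty subsets of Fin n} → ℝ) given by (d_s)(t) = 1 if s ∩ t ≠ ∅ and 0 otherwise, where s ranges over all nonempty subsets of Fin n, is a basis of this (2ⁿ − 1)-dimensional space. -/
/-!
The rows `d_s` of the matrix span the whole space. Extend `d_s` to `s = ∅` by `d_∅ = 0`. Since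
`t ⊆ u` iff `t` misses `uᶜ`, the difference `d_univ - d_{uᶜ}` is the indicator of the down-set
`{t | t ⊆ u}`, and the indicators of principal down-sets span because they are unitriangular with
respect to inclusion. As no division occurs, the determinant is a unit over every commutative ring.
-/

open Submodule

theorem span_range_indicator_Iic (ι R : Type*) [Finite ι] [PartialOrder ι] [Ring R] :
    span R (Set.range fun i : ι => (Set.Iic i).indicator (1 : ι → R)) = ⊤ := by
  classical
  have := Fintype.ofFinite ι
  set V := span R (Set.range fun i : ι => (Set.Iic i).indicator (1 : ι → R))
  have single_mem (i : ι) : Pi.single i 1 ∈ V := by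
    induction i using WellFoundedLT.induction with
    | ind i single_mem_of_lt =>
      have single_eq : (Pi.single i 1 : ι → R) =
          (Set.Iic i).indicator 1 - ∑ j with j < i, Pi.single j 1 := by
        ext k
        rcases eq_or_ne k i with rfl | hne
        · simp [Pi.single_apply]
        · simp [Pi.single_apply, Set.indicator_apply, hne, lt_iff_le_and_ne]
      rw [single_eq]
      exact V.sub_mem (subset_span ⟨i, rfl⟩)
        (V.sum_mem fun j hj => single_mem_of_lt j (Finset.mem_filter.mp hj).2)
  rw [eq_top_iff, ← (Pi.basisFun R ι).span_eq, span_le]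
  rintro _ ⟨i, rfl⟩
  simpa only [Pi.basisFun_apply, SetLike.mem_coe] using single_mem i

theorem isUnit_det_of_span_range_row_eq_top {m R : Type*} [Fintype m] [DecidableEq m]
    [CommRing R] {A : Matrix m m R} (hA : span R (Set.range A.row) = ⊤) : IsUnit A.det := by
  rw [← Matrix.isUnit_iff_isUnit_det, ← Matrix.vecMul_surjective_iff_isUnit]
  rw [← range_vecMulLinear, LinearMap.range_eq_top] at hA
  exact hA

section intersectionIndicator

variable {α : Type*} [DecidableEq α] (R : Type*)

/-- The vector `d_s`, which up to sign lists the coordinates of the subsystem depolarizing gauge of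
`s` in the cut basis: the indicator, among nonempty sets `t`, of those that meet `s`. The set `s`
itself may be empty, in which case the vector is zero. -/
def intersectionIndicator [Zero R] [One R] (s : Finset α) (t : {t : Finset α // t.Nonempty}) : R :=
  if (s ∩ t.1).Nonempty then 1 else 0

theorem intersectionIndicator_empty [Zero R] [One R] :
    intersectionIndicator R (∅ : Finset α) = 0 := by
  ext t
  simp [intersectionIndicator]

theorem intersectionIndicator_univ_sub_compl [Fintype α] [AddGroupWithOne R]
    (u : {u : Finset α // u.Nonempty}) :
    intersectionIndicator R Finset.univ - intersectionIndicator R u.1ᶜ =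
      (Set.Iic u).indicator 1 := by
  ext t
  have meets_compl_iff : (u.1ᶜ ∩ t.1).Nonempty ↔ ¬ t ≤ u := by
    rw [← Finset.not_disjoint_iff_nonempty_inter, disjoint_comm, disjoint_compl_right_iff,
      Subtype.coe_le_coe]
  by_cases htu : t ≤ u <;> simp [intersectionIndicator, meets_compl_iff, htu, t.2]

theorem span_range_intersectionIndicator [Finite α] [Ring R] :
    span R (Set.range fun s : {s : Finset α // s.Nonempty} => intersectionIndicator R s.1) = ⊤ := by
  have := Fintype.ofFinite α
  set V := span R (Set.range fun s : {s : Finset α // s.Nonempty} => intersectionIndicator R s.1)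
  have intersectionIndicator_mem (s : Finset α) : intersectionIndicator R s ∈ V := by
    rcases s.eq_empty_or_nonempty with rfl | hs
    · rw [intersectionIndicator_empty]
      exact V.zero_mem
    · exact subset_span ⟨⟨s, hs⟩, rfl⟩
  rw [eq_top_iff, ← span_range_indicator_Iic, span_le]
  rintro _ ⟨u, rfl⟩
  simpa only [intersectionIndicator_univ_sub_compl, SetLike.mem_coe] using
    V.sub_mem (intersectionIndicator_mem Finset.univ) (intersectionIndicator_mem u.1ᶜ)

end intersectionIndicator

theorem intersection_indicator_matrix_det_ne_zero_general (α R : Type*) [Fintype α]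
    [DecidableEq α] [CommRing R] :
    IsUnit (Matrix.of (fun s t : {s : Finset α // s.Nonempty} =>
      if (s.1 ∩ t.1).Nonempty then (1 : R) else 0)).det :=
  isUnit_det_of_span_range_row_eq_top (span_range_intersectionIndicator R)

/-- The 0/1 matrix indexed by nonempty subsets of `Fin n`, with entry `1` at `(s, t)`
iff `s ∩ t ≠ ∅`, has nonzero determinant over `ℚ` (i.e. it is invertible); equivalently,
the subsystem depolarizing gauge vectors `d_s` form a basis of the `(2ⁿ - 1)`-dimensional
space. -/
theorem intersection_indicator_matrix_det_ne_zero (n : ℕ) (hn : 1 ≤ n) :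
    (Matrix.of (fun s t : {s : Finset (Fin n) // s.Nonempty} =>
        if (s.1 ∩ t.1).Nonempty then (1 : ℚ) else 0)).det ≠ 0 :=
  (intersection_indicator_matrix_det_ne_zero_general (Fin n) ℚ).ne_zero
end

section
/- Let n ≥ 1 and let z and t be nonempty subsets of Fin n. Then the sum over all nonempty subsets s of Fin n containing zᶜ (the complement of z in Fin n) of (−1)^{|s| − |zᶜ|} · [s ∩ t ≠ ∅] equals −1 if t = z and 0 otherwise, where [·] denotes the 0/1 indicator. -/
/-!
The indicator `[s ∩ t ≠ ∅]` is `1 - [s ⊆ tᶜ]`; in particular `s = ∅` contributes nothing. Since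
`(-1) ^ (|s| - |a|)` is the Möbius function `μ(a, s)` of the Boolean lattice, its sum over the
sets `s` between `a` and `b` is `[a = b]`. Applied to the intervals from `zᶜ` to the full set and
from `zᶜ` to `tᶜ`, this gives the value `[zᶜ = univ] - [zᶜ = tᶜ] = [z = ∅] - [t = z]`.
-/

open Finset

section

variable {α R : Type*} [DecidableEq α]

lemma ite_inter_nonempty_eq_one_sub [Fintype α] [AddGroupWithOne R] (s t : Finset α) :
    (if (s ∩ t).Nonempty then 1 else 0 : R) = 1 - if s ⊆ tᶜ then 1 else 0 := by
  have hiff : (s ∩ t).Nonempty ↔ ¬ s ⊆ tᶜ := by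
    rw [subset_compl_iff_disjoint_right, not_disjoint_iff_nonempty_inter]
  by_cases h : s ⊆ tᶜ <;> simp [hiff, h]

variable [Ring R]

lemma sum_powerset_neg_one_pow_card_eq_ite (a : Finset α) :
    ∑ u ∈ a.powerset, (-1 : R) ^ #u = if a = ∅ then 1 else 0 := by
  exact_mod_cast congrArg (Int.cast : ℤ → R) (sum_powerset_neg_one_pow_card (x := a))

lemma sum_Icc_neg_one_pow_card_sub (a b : Finset α) :
    ∑ s ∈ Icc a b, (-1 : R) ^ (#s - #a) = if a = b then 1 else 0 := by
  by_cases hab : a ⊆ b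
  · have hdisj {u : Finset α} (hu : u ∈ (b \ a).powerset) : Disjoint a u :=
      disjoint_sdiff.mono_right (mem_powerset.mp hu)
    have hinj : Set.InjOn (a ∪ ·) ((b \ a).powerset : Set (Finset α)) := fun u hu v hv huv ↦ by
      rw [← union_sdiff_cancel_left (hdisj hu), ← union_sdiff_cancel_left (hdisj hv)]
      exact congrArg (· \ a) huv
    calc ∑ s ∈ Icc a b, (-1 : R) ^ (#s - #a)
      _ = ∑ u ∈ (b \ a).powerset, (-1 : R) ^ (#(a ∪ u) - #a) := by
        rw [Icc_eq_image_powerset hab, sum_image hinj]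
      _ = ∑ u ∈ (b \ a).powerset, (-1 : R) ^ #u :=
        sum_congr rfl fun u hu ↦ by rw [card_union_of_disjoint (hdisj hu), Nat.add_sub_cancel_left]
      _ = if a = b then 1 else 0 := by
        simp only [sum_powerset_neg_one_pow_card_eq_ite, sdiff_eq_empty_iff_subset,
          hab.ge_iff_eq]
  · rw [Icc_eq_empty hab, sum_empty, if_neg fun h ↦ hab h.subset]

theorem sdg_inversion_general [Fintype α] {z : Finset α} (hz : z.Nonempty) (t : Finset α) :
    ∑ s with s.Nonempty ∧ zᶜ ⊆ s,
        (-1 : R) ^ (#s - #zᶜ) * (if (s ∩ t).Nonempty then 1 else 0) =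
      if t = z then -1 else 0 := by
  have hne : zᶜ ≠ univ := by simpa using hz.ne_empty
  calc ∑ s with s.Nonempty ∧ zᶜ ⊆ s,
        (-1 : R) ^ (#s - #zᶜ) * (if (s ∩ t).Nonempty then 1 else 0)
    _ = ∑ s ∈ Icc zᶜ univ, (-1 : R) ^ (#s - #zᶜ) * (if (s ∩ t).Nonempty then 1 else 0) := by
      refine sum_subset (fun s hs ↦ by simp_all) fun s hs hs' ↦ ?_
      have hempty : s = ∅ := by simp_all
      simp [hempty]
    _ = ∑ s ∈ Icc zᶜ univ, (-1 : R) ^ (#s - #zᶜ) - ∑ s ∈ Icc zᶜ tᶜ, (-1 : R) ^ (#s - #zᶜ) := by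
      have hfilter : {s ∈ Icc zᶜ univ | s ⊆ tᶜ} = Icc zᶜ tᶜ := by ext; simp
      simp only [ite_inter_nonempty_eq_one_sub, mul_sub, mul_one, mul_ite, mul_zero,
        sum_sub_distrib, ← sum_filter, hfilter]
    _ = if t = z then -1 else 0 := by
      simp only [sum_Icc_neg_one_pow_card_sub, if_neg hne, compl_inj_iff, eq_comm (a := z)]
      split_ifs <;> simp

end

/-- Inclusion–exclusion identity expressing a canonical cut vector in terms of the
subsystem depolarizing gauges: for nonempty subsets `z, t` of `Fin n`,
`Σ_{s ⊇ zᶜ, s ≠ ∅} (−1)^{|s|−|zᶜ|} · [s ∩ t ≠ ∅] = −1` if `t = z` and `0` otherwise. -/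
theorem sdg_inversion (n : ℕ) (hn : 1 ≤ n) (z t : Finset (Fin n))
    (hz : z.Nonempty) (ht : t.Nonempty) :
    (∑ s ∈ Finset.univ.filter (fun s : Finset (Fin n) => s.Nonempty ∧ zᶜ ⊆ s),
        (-1 : ℝ) ^ (s.card - zᶜ.card) * (if (s ∩ t).Nonempty then 1 else 0)) =
      if t = z then -1 else 0 :=
  sdg_inversion_general hz t
end

section
/- Let n ∈ ℕ and let λ : (Fin n → Fin 4) → ℝ satisfy λ(a) > 0 for all a and λ(0) = 1, where 0 denotes the all-identity string. Then there exists r : (Fin n → Fin 4) → ℝ with r(0) = 0 such that for every a, λ(a) = Π_{b ◁ a, b ≠ 0} exp(−r(b)). -/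
/-- `b` is majorized by `a` (`b ◁ a`): on the support of `b`, `a` agrees with `b`. -/
def pauliMaj {n : ℕ} (b a : Fin n → Fin 4) : Prop :=
  ∀ i, b i ≠ 0 → a i = b i

instance {n : ℕ} (b a : Fin n → Fin 4) : Decidable (pauliMaj b a) :=
  inferInstanceAs (Decidable (∀ i, b i ≠ 0 → a i = b i))

/-!
Majorization is a partial order whose least element is the identity string. Taking logarithms turns
the factorization into `∑ b ∈ Iic a, r b = -log (lam a)`, a linear system over this order, which
Möbius inversion solves explicitly: `r a = -∑ b ∈ Iic a, μ(b, a) log (lam b)`. The normalization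
`lam 0 = 1` says that `r` vanishes at the identity, so that factor may be left out.
-/

open Finset

section OrderBot

variable {α : Type*} [PartialOrder α] [LocallyFiniteOrder α] [OrderBot α]

theorem Ioc_bot_eq_filter [Fintype α] [DecidableEq α] [DecidableLE α] (a : α) :
    Ioc ⊥ a = univ.filter (fun b ↦ b ≤ a ∧ b ≠ ⊥) := by
  ext b
  rw [mem_Ioc, mem_filter_univ, bot_lt_iff_ne_bot, and_comm]

/- The lemma `IncidenceAlgebra.moebius_inversion_bot` shows that a solution `g` of
`∑ x ∈ Iic a, g x = f a` must be the inner sum here; this is the converse. -/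
theorem sum_Iic_sum_Iic_mu_smul [DecidableEq α] {G : Type*} [AddCommGroup G] (f : α → G) (a : α) :
    ∑ x ∈ Iic a, ∑ y ∈ Iic x, IncidenceAlgebra.mu ℤ y x • f y = f a :=
  calc
    ∑ x ∈ Iic a, ∑ y ∈ Iic x, IncidenceAlgebra.mu ℤ y x • f y
    _ = ∑ y ∈ Iic a, ∑ x ∈ Icc y a, IncidenceAlgebra.mu ℤ y x • f y := by
      refine sum_comm' fun x y ↦ ?_
      simp only [mem_Iic, mem_Icc]
      exact ⟨fun ⟨hxa, hyx⟩ ↦ ⟨⟨hyx, hxa⟩, hyx.trans hxa⟩, fun ⟨⟨hyx, hxa⟩, _⟩ ↦ ⟨hxa, hyx⟩⟩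
    _ = ∑ y ∈ Iic a, (if y = a then 1 else 0 : ℤ) • f y := by
      simp only [← sum_smul, IncidenceAlgebra.sum_Icc_mu_right]
    _ = f a := by simp

theorem exists_sum_Ioc_bot_eq {G : Type*} [AddCommGroup G] (f : α → G) (hf : f ⊥ = 0) :
    ∃ g : α → G, g ⊥ = 0 ∧ ∀ a, ∑ b ∈ Ioc ⊥ a, g b = f a := by
  classical
  let g : α → G := fun x ↦ ∑ y ∈ Iic x, IncidenceAlgebra.mu ℤ y x • f y
  have sum_Iic_g (a : α) : ∑ x ∈ Iic a, g x = f a := sum_Iic_sum_Iic_mu_smul f a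
  have g_bot : g ⊥ = 0 := by simpa only [Iic_bot, sum_singleton, hf] using sum_Iic_g ⊥
  refine ⟨g, g_bot, fun a ↦ ?_⟩
  rw [← sum_Iic_g a, ← Icc_bot, ← add_sum_Ioc_eq_sum_Icc bot_le, g_bot, zero_add]

theorem pauli_channel_full_factorization_general (lam : α → ℝ) (hpos : ∀ a, 0 < lam a)
    (hbot : lam ⊥ = 1) :
    ∃ r : α → ℝ, r ⊥ = 0 ∧ ∀ a, lam a = ∏ b ∈ Ioc ⊥ a, Real.exp (-(r b)) := by
  obtain ⟨r, r_bot, sum_r⟩ :=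
    exists_sum_Ioc_bot_eq (fun a ↦ -Real.log (lam a)) (by rw [hbot, Real.log_one, neg_zero])
  refine ⟨r, r_bot, fun a ↦ ?_⟩
  rw [← Real.exp_sum, sum_neg_distrib, sum_r, neg_neg, Real.exp_log (hpos a)]

end OrderBot

section Majorization

variable {n : ℕ} {a b c : Fin n → Fin 4}

theorem pauliMaj_refl (a : Fin n → Fin 4) : pauliMaj a a := fun _ _ ↦ rfl

theorem pauliMaj_trans (hab : pauliMaj a b) (hbc : pauliMaj b c) : pauliMaj a c := fun i hi ↦
  have hb : b i = a i := hab i hi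
  (hbc i (hb ▸ hi)).trans hb

theorem pauliMaj_antisymm (hab : pauliMaj a b) (hba : pauliMaj b a) : a = b := by
  funext i
  by_cases hi : a i = 0
  · by_contra hne
    exact hne (hba i fun hb ↦ hne (hi.trans hb.symm))
  · exact (hab i hi).symm

theorem zero_pauliMaj (a : Fin n → Fin 4) : pauliMaj 0 a := fun _ h ↦ absurd rfl h

end Majorization

/-- The `n`-qubit Pauli strings ordered by majorization. A separate type is needed because
`Fin n → Fin 4` already carries the pointwise order. -/
def PauliString (n : ℕ) : Type := Fin n → Fin 4

namespace PauliString

variable {n : ℕ}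

instance : Fintype (PauliString n) := inferInstanceAs (Fintype (Fin n → Fin 4))

instance : DecidableEq (PauliString n) := inferInstanceAs (DecidableEq (Fin n → Fin 4))

instance : PartialOrder (PauliString n) where
  le := pauliMaj
  le_refl := pauliMaj_refl
  le_trans _ _ _ := pauliMaj_trans
  le_antisymm _ _ := pauliMaj_antisymm

instance : OrderBot (PauliString n) where
  bot := (0 : Fin n → Fin 4)
  bot_le := zero_pauliMaj

instance : DecidableLE (PauliString n) :=
  fun (b a : Fin n → Fin 4) ↦ inferInstanceAs (Decidable (pauliMaj b a))

instance : DecidableLT (PauliString n) := decidableLTOfDecidableLE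

instance : LocallyFiniteOrder (PauliString n) := Fintype.toLocallyFiniteOrder

end PauliString

/-- Every Pauli channel with strictly positive Pauli eigenvalues `λ` (normalized so
that `λ` at the identity is `1`) is quasi-local with respect to the full factor set:
its eigenvalues factorize as `λ a = Π_{b ◁ a, b ≠ 0} exp(−r b)`. -/
theorem pauli_channel_full_factorization (n : ℕ) (lam : (Fin n → Fin 4) → ℝ)
    (hpos : ∀ a, 0 < lam a) (hid : lam 0 = 1) :
    ∃ r : (Fin n → Fin 4) → ℝ, r 0 = 0 ∧
      ∀ a, lam a = ∏ b ∈ Finset.univ.filter (fun b => pauliMaj b a ∧ b ≠ 0),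
        Real.exp (-(r b)) := by
  have factorization :=
    pauli_channel_full_factorization_general (α := PauliString n) lam hpos hid
  simp only [Ioc_bot_eq_filter] at factorization
  exact factorization
end

section
/- Let Ω be a factor set on Fin n. In the real vector space of functions from {nonempty subsets of Fin n} to ℝ, define for each nonempty subset ν of Fin n the vectors α_ν and β_ν by α_ν(μ) = 1 if ν ⊆ μ and 0 otherwise, and β_ν(μ) = 1 if ν ∩ μ ≠ ∅ and 0 otherwise. Then the linear span of {α_ν : ν ∈ Ω} equals the linear span of {β_ν : ν ∈ Ω}. -/
/-!
For `x i` the function `t ↦ [i ∈ t]`, one has `α_ν = ∏ i ∈ ν, x i` and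
`β_ν = 1 - ∏ i ∈ ν, (1 - x i)`. Expanding the second product writes `β_ν` as the sum of
`(-1)^(|s|+1) α_s` over the nonempty `s ⊆ ν`. The same expansion with `1 - x` in place of `x` writes
`1 - α_ν` as a signed sum of the `1 - β_s`, and for nonempty `ν` the signs add up to `1`, so `α_ν`
is the same signed sum of the `β_s`. A downward closed `Ω` contains every `s` that occurs.
-/

section SignedSums

variable {ι A : Type*} [CommRing A]

lemma one_sub_prod_one_sub_eq_sum (ν : Finset ι) (x : ι → A) :
    1 - ∏ i ∈ ν, (1 - x i) =
      ∑ s ∈ ν.powerset with s.Nonempty, (-1 : ℤ) ^ (s.card + 1) • ∏ i ∈ s, x i := by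
  have expansion : ∏ i ∈ ν, (1 - x i) =
      ∑ s ∈ ν.powerset, (-1 : ℤ) ^ s.card • ∏ i ∈ s, x i := by
    simp [sub_eq_add_neg, Finset.prod_one_add, Finset.prod_neg]
  have filter_not_nonempty : {s ∈ ν.powerset | ¬s.Nonempty} = {∅} := by
    ext s
    simp +contextual [Finset.not_nonempty_iff_eq_empty]
  rw [expansion, ← Finset.sum_filter_not_add_sum_filter _ Finset.Nonempty, filter_not_nonempty]
  simp [pow_succ]

lemma sum_neg_one_pow_card_add_one {ν : Finset ι} (hν : ν.Nonempty) :
    ∑ s ∈ ν.powerset with s.Nonempty, (-1 : ℤ) ^ (s.card + 1) = 1 := by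
  simpa [hν.card_ne_zero] using (one_sub_prod_one_sub_eq_sum ν fun _ ↦ (1 : ℤ)).symm

lemma prod_eq_sum_one_sub_prod_one_sub {ν : Finset ι} (hν : ν.Nonempty) (x : ι → A) :
    ∏ i ∈ ν, x i =
      ∑ s ∈ ν.powerset with s.Nonempty, (-1 : ℤ) ^ (s.card + 1) • (1 - ∏ i ∈ s, (1 - x i)) := by
  have complementary : 1 - ∏ i ∈ ν, x i =
      ∑ s ∈ ν.powerset with s.Nonempty, (-1 : ℤ) ^ (s.card + 1) • ∏ i ∈ s, (1 - x i) := by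
    simpa only [sub_sub_cancel] using one_sub_prod_one_sub_eq_sum ν fun i ↦ 1 - x i
  simp_rw [smul_sub]
  rw [Finset.sum_sub_distrib, ← complementary, ← Finset.sum_smul,
    sum_neg_one_pow_card_add_one hν, one_smul, sub_sub_cancel]

end SignedSums

section Span

variable {ι : Type*} {Ω : Set (Finset ι)}

lemma span_image_le_span_image_of_eq_sum {R M : Type*} [Ring R] [AddCommGroup M] [Module R M]
    (hdc : ∀ ν ∈ Ω, ∀ μ ⊆ ν, μ.Nonempty → μ ∈ Ω) {a b : Finset ι → M} {c : Finset ι → ℤ}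
    (hab : ∀ ν ∈ Ω, a ν = ∑ s ∈ ν.powerset with s.Nonempty, c s • b s) :
    Submodule.span R (a '' Ω) ≤ Submodule.span R (b '' Ω) := by
  rw [Submodule.span_le]
  rintro _ ⟨ν, hν, rfl⟩
  rw [hab ν hν]
  refine sum_mem fun s hs ↦ zsmul_mem (Submodule.subset_span (Set.mem_image_of_mem b ?_)) _
  rw [Finset.mem_filter, Finset.mem_powerset] at hs
  exact hdc ν hν s hs.1 hs.2

lemma span_prod_eq_span_one_sub_prod_one_sub (R : Type*) {A : Type*} [Ring R] [CommRing A]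
    [Module R A] (hne : ∀ ν ∈ Ω, ν.Nonempty)
    (hdc : ∀ ν ∈ Ω, ∀ μ ⊆ ν, μ.Nonempty → μ ∈ Ω) (x : ι → A) :
    Submodule.span R ((fun ν ↦ ∏ i ∈ ν, x i) '' Ω) =
      Submodule.span R ((fun ν ↦ 1 - ∏ i ∈ ν, (1 - x i)) '' Ω) :=
  le_antisymm
    (span_image_le_span_image_of_eq_sum hdc fun ν hν ↦
      prod_eq_sum_one_sub_prod_one_sub (hne ν hν) x)
    (span_image_le_span_image_of_eq_sum hdc fun ν _ ↦ one_sub_prod_one_sub_eq_sum ν x)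

end Span

section Indicators

variable {ι τ : Type*} [DecidableEq ι] (R : Type*)

/-- The indicator functions `j ↦ [i ∈ T j]` of the points `i : ι` along a family `T` of finite sets,
as functions `τ → R`. The vectors `α_ν` and `β_ν` are polynomials in them. -/
def memIndicator [Zero R] [One R] (T : τ → Finset ι) (i : ι) : τ → R :=
  fun j ↦ if i ∈ T j then 1 else 0

lemma prod_memIndicator [CommMonoidWithZero R] (T : τ → Finset ι) (ν : Finset ι) :
    ∏ i ∈ ν, memIndicator R T i = fun j ↦ if ν ⊆ T j then 1 else 0 := by
  ext j
  simp only [memIndicator, Finset.prod_apply, Finset.prod_ite_zero, Finset.prod_const_one,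
    Finset.subset_iff]

lemma one_sub_memIndicator [AddGroupWithOne R] (T : τ → Finset ι) (i : ι) :
    1 - memIndicator R T i = fun j ↦ if i ∉ T j then 1 else 0 := by
  ext j
  by_cases hi : i ∈ T j <;> simp [memIndicator, hi]

lemma one_sub_prod_one_sub_memIndicator [CommRing R] (T : τ → Finset ι) (ν : Finset ι) :
    1 - ∏ i ∈ ν, (1 - memIndicator R T i) =
      fun j ↦ if (ν ∩ T j).Nonempty then 1 else 0 := by
  ext j
  have avoids_iff : (∀ i ∈ ν, i ∉ T j) ↔ ¬(ν ∩ T j).Nonempty := by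
    rw [← Finset.disjoint_left, Finset.disjoint_iff_inter_eq_empty,
      Finset.not_nonempty_iff_eq_empty]
  simp only [one_sub_memIndicator, Pi.sub_apply, Pi.one_apply, Finset.prod_apply,
    Finset.prod_ite_zero, Finset.prod_const_one, avoids_iff]
  split_ifs <;> simp

end Indicators

theorem factor_set_span_eq_general {ι τ : Type*} [DecidableEq ι] (R : Type*) [CommRing R]
    (T : τ → Finset ι) {Ω : Set (Finset ι)} (hne : ∀ ν ∈ Ω, ν.Nonempty)
    (hdc : ∀ ν ∈ Ω, ∀ μ ⊆ ν, μ.Nonempty → μ ∈ Ω) :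
    Submodule.span R ((fun ν j ↦ if ν ⊆ T j then (1 : R) else 0) '' Ω) =
      Submodule.span R ((fun ν j ↦ if (ν ∩ T j).Nonempty then (1 : R) else 0) '' Ω) := by
  simpa only [prod_memIndicator, one_sub_prod_one_sub_memIndicator] using
    span_prod_eq_span_one_sub_prod_one_sub R hne hdc (memIndicator R T)

/-- For a factor set `Ω` on `Fin n` (members nonempty, downward closed), the span of
the vectors `α_ν (μ) = [ν ⊆ μ]` over `ν ∈ Ω` equals the span of the vectors
`β_ν (μ) = [ν ∩ μ ≠ ∅]` over `ν ∈ Ω`, inside the space of real functions on the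
nonempty subsets of `Fin n`. -/
theorem factor_set_span_eq (n : ℕ) (Ω : Set (Finset (Fin n)))
    (hne : ∀ ν ∈ Ω, ν.Nonempty)
    (hdc : ∀ ν ∈ Ω, ∀ μ ⊆ ν, μ.Nonempty → μ ∈ Ω) :
    Submodule.span ℝ
        ((fun ν : Finset (Fin n) =>
          (fun t : {t : Finset (Fin n) // t.Nonempty} =>
            if ν ⊆ t.1 then (1 : ℝ) else 0)) '' Ω) =
      Submodule.span ℝ
        ((fun ν : Finset (Fin n) =>
          (fun t : {t : Finset (Fin n) // t.Nonempty} =>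
            if (ν ∩ t.1).Nonempty then (1 : ℝ) else 0)) '' Ω) := by
  exact factor_set_span_eq_general ℝ Subtype.val hne hdc
end

section
/- Let n ∈ ℕ and b, c : Fin n → Fin 4, and suppose there exists a coordinate i with b i ≠ 0 and c i = 0. Then Σ_{a ◁ b} (−1)^{w(a)} · ⟨a,c⟩ = 0, where the sum ranges over all a : Fin n → Fin 4 with a ◁ b and ⟨a,c⟩ ∈ {0,1} ⊆ ℝ is the symplectic indicator. -/
/-- The Pauli weight: the number of non-identity tensor factors. -/
def pauliWt {n : ℕ} (a : Fin n → Fin 4) : ℕ :=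
  (Finset.univ.filter (fun i => a i ≠ 0)).card

/-- Two single-qubit Pauli labels anticommute iff both are non-identity and distinct. -/
def pauliAnti (p q : Fin 4) : Prop := p ≠ 0 ∧ q ≠ 0 ∧ p ≠ q

instance (p q : Fin 4) : Decidable (pauliAnti p q) :=
  inferInstanceAs (Decidable (p ≠ 0 ∧ q ≠ 0 ∧ p ≠ q))

/-- The number of coordinates at which two Pauli strings anticommute. -/
def pauliN {n : ℕ} (a b : Fin n → Fin 4) : ℕ :=
  (Finset.univ.filter (fun i => pauliAnti (a i) (b i))).card

/-- The symplectic indicator `⟨a,b⟩ ∈ {0,1} ⊆ ℝ`: the parity of `pauliN a b`. -/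
def sympInd {n : ℕ} (a b : Fin n → Fin 4) : ℝ := ((pauliN a b % 2 : ℕ) : ℝ)

/-!
Toggling one factor of `a` between `0` and `b i`, where `b i ≠ 0`, is a fixed-point-free
involution of `{a | a ◁ b}` that changes the weight by exactly one. Hence the terms
`(-1) ^ w(a) * f a` cancel in pairs for every `f` that does not depend on the `i`-th factor, and
`a ↦ ⟨a, c⟩` is such an `f` as soon as `c i = 0`.
-/

open Function

section Update

variable {n : ℕ} {a b c : Fin n → Fin 4} {i : Fin n} {p : Fin 4}

theorem pauliWt_update_zero_add_one (ha : a i ≠ 0) : pauliWt (update a i 0) + 1 = pauliWt a := by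
  have hsupp : Finset.univ.filter (fun j => update a i 0 j ≠ 0) =
      (Finset.univ.filter fun j => a j ≠ 0).erase i := by
    ext j
    rcases eq_or_ne j i with rfl | hj <;> simp [*]
  rw [pauliWt, hsupp, Finset.card_erase_add_one (by simpa using ha), pauliWt]

theorem pauliWt_update_of_eq_zero (ha : a i = 0) (hp : p ≠ 0) :
    pauliWt (update a i p) = pauliWt a + 1 := by
  have hwt := pauliWt_update_zero_add_one (a := update a i p) (i := i) (by simpa using hp)
  rw [← hwt, update_idem, ← ha, update_eq_self]

theorem pauliMaj.update (hab : pauliMaj a b) (hp : p ≠ 0 → b i = p) :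
    pauliMaj (update a i p) b := by
  intro j
  rcases eq_or_ne j i with rfl | hj
  · simpa using hp
  · simpa [hj] using hab j

theorem pauliN_update_left (hc : c i = 0) : pauliN (update a i p) c = pauliN a c := by
  have hanti (j : Fin n) : pauliAnti (update a i p j) (c j) ↔ pauliAnti (a j) (c j) := by
    rcases eq_or_ne j i with rfl | hj <;> simp [pauliAnti, *]
  simp only [pauliN, hanti]

theorem sympInd_update_left (hc : c i = 0) : sympInd (update a i p) c = sympInd a c := by
  rw [sympInd, sympInd, pauliN_update_left hc]

end Update

/-- The string `a` with its `i`-th factor switched between the identity and `b i`: the pairing map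
of the cancellation. Any non-identity factor at `i` is sent to the identity, whether or not
it equals `b i`, so the map is an involution only on strings with `a i ∈ {0, b i}`. -/
def pauliToggle {n : ℕ} (b : Fin n → Fin 4) (i : Fin n) (a : Fin n → Fin 4) : Fin n → Fin 4 :=
  update a i (if a i = 0 then b i else 0)

section Toggle

variable {n : ℕ} {a b : Fin n → Fin 4} {i : Fin n}

theorem pauliToggle_of_eq_zero (ha : a i = 0) : pauliToggle b i a = update a i (b i) := by
  rw [pauliToggle, if_pos ha]

theorem pauliToggle_of_ne_zero (ha : a i ≠ 0) : pauliToggle b i a = update a i 0 := by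
  rw [pauliToggle, if_neg ha]

theorem pauliMaj.toggle (hab : pauliMaj a b) : pauliMaj (pauliToggle b i a) b :=
  hab.update fun hp => by simp_all

theorem pauliToggle_pauliToggle (hb : b i ≠ 0) (hab : pauliMaj a b) :
    pauliToggle b i (pauliToggle b i a) = a := by
  by_cases ha : a i = 0
  · rw [pauliToggle_of_eq_zero ha, pauliToggle_of_ne_zero (by simpa using hb), update_idem, ← ha,
      update_eq_self]
  · rw [pauliToggle_of_ne_zero ha, pauliToggle_of_eq_zero (by simp), update_idem, hab i ha,
      update_eq_self]

theorem neg_one_pow_pauliWt_pauliToggle {R : Type*} [Monoid R] [HasDistribNeg R] (hb : b i ≠ 0) :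
    (-1 : R) ^ pauliWt (pauliToggle b i a) = -(-1) ^ pauliWt a := by
  by_cases ha : a i = 0
  · rw [pauliToggle_of_eq_zero ha, pauliWt_update_of_eq_zero ha hb, pow_succ, mul_neg_one]
  · rw [pauliToggle_of_ne_zero ha, ← pauliWt_update_zero_add_one ha, pow_succ, mul_neg_one,
      neg_neg]

theorem pauliToggle_ne_self (hb : b i ≠ 0) : pauliToggle b i a ≠ a := by
  intro hfix
  have hsign := neg_one_pow_pauliWt_pauliToggle (R := ℤ) (a := a) hb
  rw [hfix, self_eq_neg] at hsign
  exact pow_ne_zero _ (by decide) hsign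

end Toggle

theorem moebius_coefficient_cancellation_general {R : Type*} [Ring R] {n : ℕ} {b : Fin n → Fin 4}
    {i : Fin n} (hb : b i ≠ 0) {f : (Fin n → Fin 4) → R} (hf : ∀ a p, f (update a i p) = f a) :
    ∑ a ∈ Finset.univ.filter (fun a => pauliMaj a b), (-1 : R) ^ pauliWt a * f a = 0 := by
  refine Finset.sum_involution (fun a _ => pauliToggle b i a) (fun a _ => ?cancel)
    (fun a _ _ => pauliToggle_ne_self hb) (fun a ha => ?maj) (fun a ha => ?involutive)
  case cancel =>
    have hfa : f (pauliToggle b i a) = f a := hf a _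
    rw [neg_one_pow_pauliWt_pauliToggle hb, hfa, neg_mul, add_neg_cancel]
  case maj =>
    exact Finset.mem_filter.2 ⟨Finset.mem_univ _, (Finset.mem_filter.1 ha).2.toggle⟩
  case involutive =>
    exact pauliToggle_pauliToggle hb (Finset.mem_filter.1 ha).2

/-- If `b` has a non-identity coordinate where `c` is the identity, then
`Σ_{a ◁ b} (−1)^{w(a)} ⟨a,c⟩ = 0`. -/
theorem moebius_coefficient_cancellation (n : ℕ) (b c : Fin n → Fin 4)
    (h : ∃ i, b i ≠ 0 ∧ c i = 0) :
    (∑ a ∈ Finset.univ.filter (fun a => pauliMaj a b),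
        (-1 : ℝ) ^ (pauliWt a) * sympInd a c) = 0 := by
  obtain ⟨i, hb, hc⟩ := h
  exact moebius_coefficient_cancellation_general hb fun _ _ => sympInd_update_left hc
end

section
/- Let n ∈ ℕ and b, c : Fin n → Fin 4, and suppose there exists a coordinate i with c i = 0 and b i ≠ 0. Then Σ_{a : c ◁ a} (−1)^{N(a,b)} = 0, where the sum ranges over all a : Fin n → Fin 4 with c ◁ a and N(a,b) is the number of coordinates at which a and b anticommute. -/
/-!
The sum factorizes over coordinates: the strings `a` with `c ◁ a` form a product set, and
`(-1) ^ N(a, b)` is the product of the single-qubit signs. At a coordinate where `c` is the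
identity and `b` is not, the factor is a sum over all four labels, two of which commute
with `b i` and two of which anticommute with it, so it vanishes.
-/

/-- The commutation sign of two single-qubit Pauli labels: `P Q = pauliSign R p q • Q P` for the
Pauli matrices `P`, `Q` labelled by `p`, `q`, with the sign taken in `R`. -/
def pauliSign (R : Type*) [One R] [Neg R] (p q : Fin 4) : R :=
  if pauliAnti p q then -1 else 1

theorem card_filter_pauliAnti {q : Fin 4} (hq : q ≠ 0) :
    (Finset.univ.filter (fun p => pauliAnti p q)).card = 2 := by
  decide +revert

theorem card_filter_not_pauliAnti {q : Fin 4} (hq : q ≠ 0) :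
    (Finset.univ.filter (fun p => ¬ pauliAnti p q)).card = 2 := by
  decide +revert

theorem sum_pauliSign_eq_zero (R : Type*) [AddCommGroupWithOne R] {q : Fin 4} (hq : q ≠ 0) :
    ∑ p, pauliSign R p q = 0 := by
  simp only [pauliSign, Finset.sum_ite, Finset.sum_const, card_filter_pauliAnti hq,
    card_filter_not_pauliAnti hq, smul_neg, neg_add_cancel]

theorem neg_one_pow_pauliN (R : Type*) [CommMonoid R] [HasDistribNeg R] {n : ℕ}
    (a b : Fin n → Fin 4) :
    (-1 : R) ^ pauliN a b = ∏ j, pauliSign R (a j) (b j) := by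
  simp only [pauliN, pauliSign, Finset.prod_ite, Finset.prod_const, one_pow, mul_one]

theorem filter_pauliMaj_eq_piFinset {n : ℕ} (c : Fin n → Fin 4) :
    Finset.univ.filter (fun a => pauliMaj c a) =
      Fintype.piFinset (fun j => if c j = 0 then Finset.univ else {c j}) := by
  ext a
  rw [Finset.mem_filter_univ, Fintype.mem_piFinset]
  refine forall_congr' fun j => ?_
  by_cases hj : c j = 0 <;> simp [hj]

theorem sum_pauliMaj_prod {R : Type*} [CommSemiring R] {n : ℕ} (c : Fin n → Fin 4)
    (f : Fin n → Fin 4 → R) :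
    ∑ a ∈ Finset.univ.filter (fun a => pauliMaj c a), ∏ j, f j (a j) =
      ∏ j, if c j = 0 then ∑ p, f j p else f j (c j) := by
  rw [filter_pauliMaj_eq_piFinset, ← Finset.prod_univ_sum]
  refine Finset.prod_congr rfl fun j _ => ?_
  split_ifs
  · rfl
  · exact Finset.sum_singleton _ _

theorem fourier_coefficient_cancellation_general (R : Type*) [CommRing R] {n : ℕ}
    {b c : Fin n → Fin 4} (h : ∃ i, c i = 0 ∧ b i ≠ 0) :
    ∑ a ∈ Finset.univ.filter (fun a => pauliMaj c a), (-1 : R) ^ pauliN a b = 0 := by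
  obtain ⟨i, hci, hbi⟩ := h
  calc
    ∑ a ∈ Finset.univ.filter (fun a => pauliMaj c a), (-1 : R) ^ pauliN a b
    _ = ∑ a ∈ Finset.univ.filter (fun a => pauliMaj c a), ∏ j, pauliSign R (a j) (b j) :=
      Finset.sum_congr rfl fun a _ => neg_one_pow_pauliN R a b
    _ = ∏ j, if c j = 0 then ∑ p, pauliSign R p (b j) else pauliSign R (c j) (b j) :=
      sum_pauliMaj_prod c fun j p => pauliSign R p (b j)
    _ = 0 := Finset.prod_eq_zero (Finset.mem_univ i) <| by
      rw [if_pos hci, sum_pauliSign_eq_zero R hbi]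

/-- If `c` has an identity coordinate where `b` is non-identity, then
`Σ_{a : c ◁ a} (−1)^{N(a,b)} = 0`: exactly half of the Paulis majorizing `c`
commute with `b`. -/
theorem fourier_coefficient_cancellation (n : ℕ) (b c : Fin n → Fin 4)
    (h : ∃ i, c i = 0 ∧ b i ≠ 0) :
    (∑ a ∈ Finset.univ.filter (fun a => pauliMaj c a),
        (-1 : ℝ) ^ (pauliN a b)) = 0 :=
  fourier_coefficient_cancellation_general ℝ h
end

section
/- Let V be a real inner product space, W a linear subspace of V, A a finite set of pairwise orthogonal nonzero vectors of V, and C a finite set of vectors of V. Assume (W ∩ span A) + span C = W (sum of subspaces). Let c ∈ W ∩ span A and ϑ ∈ A with ⟨ϑ, c⟩ ≠ 0. Then (W ∩ span(A ∖ {ϑ})) + span(C ∪ {c}) = W. -/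
open scoped RealInnerProductSpace

/-!
The functional `f = ⟪ϑ, ·⟫` vanishes on `A ∖ {ϑ}` but not at `c`, hence not at `ϑ`, so `ker f` cuts
`span A` down to `span (A ∖ {ϑ})`. On the other hand, inside any subspace containing `c`, the line
through `c` is a complement of the part in `ker f`. Applied to `W ⊓ span A` this gives
`W ⊓ span A = span {c} ⊔ (W ⊓ span (A ∖ {ϑ}))`, and it remains to add `span C` to both sides.
-/

section LinearFunctional

open LinearMap Submodule

variable {K V : Type*} [DivisionRing K] [AddCommGroup V] [Module K V]

lemma isCompl_ker_span_singleton {f : V →ₗ[K] K} {v : V} (hfv : f v ≠ 0) :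
    IsCompl (ker f) (K ∙ v) := by
  have hf : f ≠ 0 := fun hf ↦ hfv (LinearMap.congr_fun hf v)
  exact isCompl_span_singleton_of_isCoatom_of_notMem
    (isCoatom_ker_of_surjective (surjective_of_ne_zero hf)) hfv

lemma span_singleton_sup_ker_inf_eq {p : Submodule K V} {f : V →ₗ[K] K} {c : V} (hc : c ∈ p)
    (hfc : f c ≠ 0) : K ∙ c ⊔ ker f ⊓ p = p := by
  have hcp : K ∙ c ≤ p := (span_singleton_le_iff_mem c p).2 hc
  rw [← sup_inf_assoc_of_le _ hcp, (isCompl_ker_span_singleton hfc).symm.sup_eq_top, top_inf_eq]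

lemma ker_inf_span_eq_span_sdiff_singleton {A : Set V} {f : V →ₗ[K] K} {v : V} (hv : v ∈ A)
    (hfv : f v ≠ 0) (hA : ∀ a ∈ A, a ≠ v → f a = 0) :
    ker f ⊓ span K A = span K (A \ {v}) := by
  have hle : span K (A \ {v}) ≤ ker f := span_le.2 fun a ha ↦ hA a ha.1 ha.2
  calc ker f ⊓ span K A
    _ = (span K (A \ {v}) ⊔ K ∙ v) ⊓ ker f := by
      rw [inf_comm, sup_comm, ← span_insert, Set.insert_sdiff_self_of_mem hv]
    _ = span K (A \ {v}) ⊔ K ∙ v ⊓ ker f := sup_inf_assoc_of_le _ hle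
    _ = span K (A \ {v}) := by
      rw [(isCompl_ker_span_singleton hfv).symm.inf_eq_bot, sup_bot_eq]

theorem greedy_basis_loop_invariant_general {W : Submodule K V} {A C : Set V} {f : V →ₗ[K] K}
    {v c : V} (hA : ∀ a ∈ A, a ≠ v → f a = 0) (hinv : (W ⊓ span K A) ⊔ span K C = W)
    (hc : c ∈ W ⊓ span K A) (hfc : f c ≠ 0) :
    (W ⊓ span K (A \ {v})) ⊔ span K (insert c C) = W := by
  have hAf : ¬A ⊆ ker f := fun hAf ↦ hfc (span_le.2 hAf hc.2)
  obtain ⟨a, ha, hfa⟩ := Set.not_subset.1 hAf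
  obtain rfl : a = v := not_imp_comm.1 (hA a ha) hfa
  calc (W ⊓ span K (A \ {a})) ⊔ span K (insert c C)
    _ = (K ∙ c ⊔ ker f ⊓ (W ⊓ span K A)) ⊔ span K C := by
      rw [← ker_inf_span_eq_span_sdiff_singleton ha hfa hA, span_insert, inf_left_comm,
        sup_left_comm, sup_assoc]
    _ = (W ⊓ span K A) ⊔ span K C := by rw [span_singleton_sup_ker_inf_eq hc hfc]
    _ = W := hinv

end LinearFunctional

/-- Loop invariant of the greedy basis-finding algorithm: if
`(W ⊓ span A) ⊔ span C = W`, the elements of `A` are pairwise orthogonal and nonzero,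
`c ∈ W ⊓ span A`, and `ϑ ∈ A` has `⟪ϑ, c⟫ ≠ 0`, then
`(W ⊓ span (A ∖ {ϑ})) ⊔ span (C ∪ {c}) = W`. -/
theorem greedy_basis_loop_invariant {V : Type*}
    [NormedAddCommGroup V] [InnerProductSpace ℝ V] [DecidableEq V]
    (W : Submodule ℝ V) (A C : Finset V)
    (hA0 : ∀ a ∈ A, a ≠ 0)
    (hAorth : ∀ a ∈ A, ∀ b ∈ A, a ≠ b → ⟪a, b⟫ = 0)
    (hinv : (W ⊓ Submodule.span ℝ (A : Set V)) ⊔ Submodule.span ℝ (C : Set V) = W)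
    (c : V) (hc : c ∈ W ⊓ Submodule.span ℝ (A : Set V))
    (ϑ : V) (hϑ : ϑ ∈ A) (hϑc : ⟪ϑ, c⟫ ≠ 0) :
    (W ⊓ Submodule.span ℝ ((A.erase ϑ : Finset V) : Set V)) ⊔
        Submodule.span ℝ ((insert c C : Finset V) : Set V) = W := by
  simpa using greedy_basis_loop_invariant_general (f := innerₛₗ ℝ ϑ)
    (fun a ha hne ↦ hAorth ϑ hϑ a ha hne.symm) hinv hc hϑc
end

section
/- Let Ω be a factor set on Fin n and let η : (Fin n → Fin 4) → ℝ satisfy η(b) < 1/2 for every b. Define λ : (Fin n → Fin 4) → ℝ by λ(a) = Π_{b : supp(b) ∈ Ω} (1 − 2·η(b))^{⟨a,b⟩}, the product over all b whose support belongs to Ω, with exponent the symplectic indicator ⟨a,b⟩ ∈ {0,1}. Then there exists r : (Fin n → Fin 4) → ℝ with r(b) = 0 whenever supp(b) ∉ Ω, such that for every a, λ(a) = exp(−Σ_{b ◁ a, supp(b) ∈ Ω} r(b)). -/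
/-- The support of a Pauli string: the set of non-identity coordinates. -/
def pauliSupp {n : ℕ} (a : Fin n → Fin 4) : Finset (Fin n) :=
  Finset.univ.filter (fun i => a i ≠ 0)

/-!
Since `η b < 1/2`, each factor `(1 - 2 η b)^⟨a,b⟩` is positive, depends only on the restriction of
`a` to `supp b`, and equals `1` at `a = 0`. These three properties suffice. As in the
Hammersley–Clifford theorem, Möbius inversion over the subsets `S` of coordinates writes `log λ`
as a sum of interactions, the one of `S` being a function of the restriction of `a` to `S` that
vanishes when `a` vanishes somewhere on `S`. The nonzero interactions at `a` are therefore indexed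
by the restrictions of `a`, that is, by the `c ◁ a`. The interaction on `S` of a function that
depends only on the coordinates in `ν` vanishes unless `S ⊆ ν`, so, `Ω` being downward closed, only
the `c` with `supp c ∈ Ω` contribute.
-/

open Finset

section Moebius

variable {ι G : Type*} [DecidableEq ι] [AddCommGroup G]

/-- The Möbius transform of a set function over the Boolean lattice of finite sets: the function
whose sum over the subsets of `S` recovers `g S`. -/
def moebiusTransform (g : Finset ι → G) (S : Finset ι) : G :=
  ∑ T ∈ S.powerset, (-1 : ℤ) ^ #(S \ T) • g T

lemma moebiusTransform_insert (g : Finset ι → G) {i : ι} {S : Finset ι} (hi : i ∉ S) :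
    moebiusTransform g (insert i S) =
      moebiusTransform (fun T => g (insert i T)) S - moebiusTransform g S := by
  have sum_without_i : ∑ T ∈ S.powerset, (-1 : ℤ) ^ #(insert i S \ T) • g T =
      -moebiusTransform g S := by
    rw [moebiusTransform, ← sum_neg_distrib]
    refine sum_congr rfl fun T hT => ?_
    have hiT : i ∉ T := fun h => hi (mem_powerset.mp hT h)
    rw [insert_sdiff_of_notMem _ hiT, card_insert_of_notMem (by simp [hi]), pow_succ,
      mul_neg_one, neg_smul]
  have sum_with_i :
      ∑ T ∈ S.powerset, (-1 : ℤ) ^ #(insert i S \ insert i T) • g (insert i T) =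
        moebiusTransform (fun T => g (insert i T)) S := by
    refine sum_congr rfl fun T _ => ?_
    rw [insert_sdiff_insert, sdiff_insert_of_notMem hi]
  rw [moebiusTransform, sum_powerset_insert hi, sum_without_i, sum_with_i, neg_add_eq_sub]

lemma sum_powerset_moebiusTransform (g : Finset ι → G) (A : Finset ι) :
    ∑ S ∈ A.powerset, moebiusTransform g S = g A := by
  induction A using Finset.induction_on generalizing g with
  | empty => simp [moebiusTransform]
  | insert i A hi ih =>
    have sum_with_i : ∑ S ∈ A.powerset, moebiusTransform g (insert i S) =
        g (insert i A) - g A := by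
      rw [← ih g, ← ih fun T => g (insert i T), ← sum_sub_distrib]
      exact sum_congr rfl fun S hS =>
        moebiusTransform_insert g fun h => hi (mem_powerset.mp hS h)
    rw [sum_powerset_insert hi, ih, sum_with_i, add_sub_cancel]

lemma moebiusTransform_eq_zero_of_forall_insert_eq {g : Finset ι → G} {i : ι}
    {S : Finset ι} (hi : i ∈ S) (hg : ∀ T, g (insert i T) = g T) : moebiusTransform g S = 0 := by
  rw [← insert_erase hi, moebiusTransform_insert g (notMem_erase i S)]
  simp only [hg, sub_self]

end Moebius

section Interaction

variable {ι G : Type*} {α : ι → Type*} [DecidableEq ι] [∀ i, Zero (α i)] [AddCommGroup G]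

/-- The interaction of the coordinates in `S` in the function `F`, with `0` as the reference
configuration: the Möbius transform of the set function that evaluates `F` at the restrictions
of `a`, where restricting to `T` replaces the coordinates outside `T` by `0`. -/
def interaction (F : (∀ i, α i) → G) (S : Finset ι) (a : ∀ i, α i) : G :=
  moebiusTransform (fun T => F (T.piecewise a 0)) S

lemma interaction_empty (F : (∀ i, α i) → G) (a : ∀ i, α i) : interaction F ∅ a = F 0 := by
  simp [interaction, moebiusTransform]

lemma interaction_sum {κ : Type*} (s : Finset κ) (F : κ → (∀ i, α i) → G) (S : Finset ι)
    (a : ∀ i, α i) :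
    interaction (fun x => ∑ k ∈ s, F k x) S a = ∑ k ∈ s, interaction (F k) S a := by
  simp only [interaction, moebiusTransform, smul_sum]
  exact sum_comm

lemma sum_interaction [Fintype ι] (F : (∀ i, α i) → G) (a : ∀ i, α i) :
    ∑ S, interaction F S a = F a := by
  rw [← powerset_univ]
  exact (sum_powerset_moebiusTransform _ univ).trans (by rw [piecewise_univ])

lemma dependsOn_interaction (F : (∀ i, α i) → G) (S : Finset ι) :
    DependsOn (interaction F S) (S : Set ι) := by
  intro a b hab
  refine sum_congr rfl fun T hT => ?_
  have restrict_eq : T.piecewise a 0 = T.piecewise b 0 :=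
    piecewise_congr T (fun i hi => hab i (mem_powerset.mp hT hi)) fun _ _ => rfl
  simp only [restrict_eq]

lemma interaction_eq_zero_of_apply_eq_zero (F : (∀ i, α i) → G) {S : Finset ι} {a : ∀ i, α i}
    {i : ι} (hi : i ∈ S) (ha : a i = 0) : interaction F S a = 0 := by
  refine moebiusTransform_eq_zero_of_forall_insert_eq hi fun T => congrArg F ?_
  rw [piecewise_insert, ha, Function.update_eq_self_iff]
  by_cases hT : i ∈ T <;> simp [hT, ha]

lemma interaction_eq_zero_of_dependsOn {F : (∀ i, α i) → G} {ν S : Finset ι}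
    (hF : DependsOn F (ν : Set ι)) (hS : ¬S ⊆ ν) (a : ∀ i, α i) : interaction F S a = 0 := by
  obtain ⟨i, hiS, hiν⟩ := not_subset.mp hS
  refine moebiusTransform_eq_zero_of_forall_insert_eq hiS fun T => hF fun j hj => ?_
  have hji : j ≠ i := fun h => hiν (h ▸ hj)
  rw [piecewise_insert_of_ne _ _ _ hji]

end Interaction

section Pauli

variable {n : ℕ}

lemma mem_pauliSupp {a : Fin n → Fin 4} {i : Fin n} : i ∈ pauliSupp a ↔ a i ≠ 0 := by
  simp [pauliSupp]

lemma dependsOn_pauliN (b : Fin n → Fin 4) :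
    DependsOn (fun a => pauliN a b) (pauliSupp b : Set (Fin n)) := by
  intro x y hxy
  refine congrArg card (filter_congr fun i _ => ?_)
  by_cases hi : b i = 0
  · simp [pauliAnti, hi]
  · rw [hxy i (mem_pauliSupp.mpr hi)]

lemma pauliN_zero_left (b : Fin n → Fin 4) : pauliN 0 b = 0 := by
  simp [pauliN, pauliAnti]

lemma pauliSupp_piecewise_zero {a : Fin n → Fin 4} {S : Finset (Fin n)}
    (hS : S ⊆ pauliSupp a) : pauliSupp (S.piecewise a 0) = S := by
  ext i
  by_cases hi : i ∈ S
  · simpa [mem_pauliSupp, hi] using mem_pauliSupp.mp (hS hi)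
  · simp [mem_pauliSupp, hi]

lemma pauliMaj_piecewise_zero (a : Fin n → Fin 4) (S : Finset (Fin n)) :
    pauliMaj (S.piecewise a 0) a := by
  intro i hi
  by_cases hS : i ∈ S <;> simp_all

lemma pauliSupp_subset_of_pauliMaj {c a : Fin n → Fin 4} (hca : pauliMaj c a) :
    pauliSupp c ⊆ pauliSupp a := by
  intro i hi
  rw [mem_pauliSupp] at hi ⊢
  rwa [hca i hi]

lemma piecewise_pauliSupp_of_pauliMaj {c a : Fin n → Fin 4} (hca : pauliMaj c a) :
    (pauliSupp c).piecewise a 0 = c := by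
  ext1 i
  by_cases hi : c i = 0
  · simp [piecewise, mem_pauliSupp, hi]
  · simp [piecewise, mem_pauliSupp, hi, hca i hi]

lemma sum_pauliMaj_eq_sum_subset {M : Type*} [AddCommMonoid M] (Ω : Finset (Finset (Fin n)))
    (a : Fin n → Fin 4) (f : (Fin n → Fin 4) → M) :
    ∑ c with pauliMaj c a ∧ pauliSupp c ∈ Ω, f c =
      ∑ S ∈ Ω with S ⊆ pauliSupp a, f (S.piecewise a 0) := by
  refine sum_nbij' pauliSupp (fun S => S.piecewise a 0) ?_ ?_ ?_ ?_ ?_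
  · intro c hc
    obtain ⟨hca, hcΩ⟩ := (mem_filter.mp hc).2
    exact mem_filter.mpr ⟨hcΩ, pauliSupp_subset_of_pauliMaj hca⟩
  · intro S hS
    obtain ⟨hSΩ, hSa⟩ := mem_filter.mp hS
    refine mem_filter.mpr ⟨mem_univ _, pauliMaj_piecewise_zero a S, ?_⟩
    rwa [pauliSupp_piecewise_zero hSa]
  · exact fun c hc => piecewise_pauliSupp_of_pauliMaj (mem_filter.mp hc).2.1
  · exact fun S hS => pauliSupp_piecewise_zero (mem_filter.mp hS).2
  · intro c hc
    rw [piecewise_pauliSupp_of_pauliMaj (mem_filter.mp hc).2.1]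

lemma sum_pauliMaj_interaction {G : Type*} [AddCommGroup G] {Ω : Finset (Finset (Fin n))}
    {F : (Fin n → Fin 4) → G} (hF : ∀ S ∉ Ω, ∀ a, interaction F S a = 0) (a : Fin n → Fin 4) :
    ∑ c with pauliMaj c a ∧ pauliSupp c ∈ Ω, interaction F (pauliSupp c) c = F a := by
  have interaction_restrict (S : Finset (Fin n)) (hS : S ⊆ pauliSupp a) :
      interaction F (pauliSupp (S.piecewise a 0)) (S.piecewise a 0) = interaction F S a := by
    rw [pauliSupp_piecewise_zero hS]
    exact dependsOn_interaction F S fun i hi => piecewise_eq_of_mem S a 0 hi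
  have interaction_not_subset (S : Finset (Fin n)) (hS : ¬S ⊆ pauliSupp a) :
      interaction F S a = 0 := by
    obtain ⟨i, hiS, hia⟩ := not_subset.mp hS
    exact interaction_eq_zero_of_apply_eq_zero F hiS (not_not.mp (mt mem_pauliSupp.mpr hia))
  calc ∑ c with pauliMaj c a ∧ pauliSupp c ∈ Ω, interaction F (pauliSupp c) c
      = ∑ S ∈ Ω with S ⊆ pauliSupp a, interaction F S a := by
        rw [sum_pauliMaj_eq_sum_subset]
        exact sum_congr rfl fun S hS => interaction_restrict S (mem_filter.mp hS).2
    _ = ∑ S ∈ Ω, interaction F S a :=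
        sum_filter_of_ne fun S _ hne => not_not.mp (mt (interaction_not_subset S) hne)
    _ = ∑ S, interaction F S a := sum_subset (subset_univ Ω) fun S _ hS => hF S hS a
    _ = F a := sum_interaction F a

theorem omega_local_factorization_general {κ : Type*} {Ω : Finset (Finset (Fin n))}
    (hdc : ∀ ν ∈ Ω, ∀ μ ⊆ ν, μ.Nonempty → μ ∈ Ω)
    {s : Finset κ} {ν : κ → Finset (Fin n)} (hν : ∀ k ∈ s, ν k ∈ Ω)
    {f : κ → (Fin n → Fin 4) → ℝ} (hpos : ∀ k ∈ s, ∀ a, 0 < f k a)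
    (hdep : ∀ k ∈ s, DependsOn (f k) (ν k : Set (Fin n))) (hone : ∏ k ∈ s, f k 0 = 1) :
    ∃ r : (Fin n → Fin 4) → ℝ, (∀ b, pauliSupp b ∉ Ω → r b = 0) ∧
      ∀ a, ∏ k ∈ s, f k a =
        Real.exp (-(∑ b with pauliMaj b a ∧ pauliSupp b ∈ Ω, r b)) := by
  let F (a : Fin n → Fin 4) : ℝ := ∑ k ∈ s, Real.log (f k a)
  have exp_F (a : Fin n → Fin 4) : Real.exp (F a) = ∏ k ∈ s, f k a := by
    rw [Real.exp_sum]
    exact prod_congr rfl fun k hk => Real.exp_log (hpos k hk a)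
  have F_zero : F 0 = 0 := by rw [← Real.exp_eq_one_iff, exp_F, hone]
  have interaction_off_Ω : ∀ S ∉ Ω, ∀ a, interaction F S a = 0 := by
    intro S hS a
    obtain rfl | hSne := S.eq_empty_or_nonempty
    · rw [interaction_empty, F_zero]
    · have not_subset_ν (k : κ) (hk : k ∈ s) : ¬S ⊆ ν k :=
        fun hSν => hS (hdc (ν k) (hν k hk) S hSν hSne)
      have dependsOn_log (k : κ) (hk : k ∈ s) :
          DependsOn (fun x => Real.log (f k x)) (ν k : Set (Fin n)) :=
        fun _ _ hxy => congrArg Real.log (hdep k hk hxy)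
      rw [interaction_sum]
      exact sum_eq_zero fun k hk =>
        interaction_eq_zero_of_dependsOn (dependsOn_log k hk) (not_subset_ν k hk) a
  refine ⟨fun c => -interaction F (pauliSupp c) c,
    fun b hb => neg_eq_zero.mpr (interaction_off_Ω _ hb b), fun a => ?_⟩
  rw [sum_neg_distrib, neg_neg, sum_pauliMaj_interaction interaction_off_Ω, exp_F]

end Pauli

/-- Forward direction of the factorization lemma: the Pauli eigenvalues
`λ a = Π_{supp b ∈ Ω} (1 − 2 η b)^{⟨a,b⟩}` of a concatenation of `Ω`-supported
two-outcome Pauli maps factorize over `Ω`-supported Paulis majorized by `a`, i.e.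
`λ a = exp(−Σ_{b ◁ a, supp b ∈ Ω} r b)` for some `r` vanishing off `Ω`. -/
theorem omega_local_factorization (n : ℕ) (Ω : Finset (Finset (Fin n)))
    (hne : ∀ ν ∈ Ω, ν.Nonempty)
    (hdc : ∀ ν ∈ Ω, ∀ μ ⊆ ν, μ.Nonempty → μ ∈ Ω)
    (η : (Fin n → Fin 4) → ℝ) (hη : ∀ b, η b < 1 / 2)
    (lam : (Fin n → Fin 4) → ℝ)
    (hlam : ∀ a, lam a = ∏ b ∈ Finset.univ.filter (fun b => pauliSupp b ∈ Ω),
        (1 - 2 * η b) ^ (pauliN a b % 2)) :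
    ∃ r : (Fin n → Fin 4) → ℝ, (∀ b, pauliSupp b ∉ Ω → r b = 0) ∧
      ∀ a, lam a = Real.exp
        (-(∑ b ∈ Finset.univ.filter (fun b => pauliMaj b a ∧ pauliSupp b ∈ Ω), r b)) := by
  simp only [hlam]
  exact omega_local_factorization_general hdc (fun b hb => (mem_filter.mp hb).2)
    (fun b _ _ => pow_pos (by linarith [hη b]) _)
    (fun b _ _ _ hxy => congrArg (fun N => (1 - 2 * η b) ^ (N % 2)) (dependsOn_pauliN b hxy))
    (prod_eq_one fun b _ => by simp [pauliN_zero_left])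
end
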